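/- Let n ≥ 1, m > n, let p ∈ P^log(ℝ^n) with p⁺ = p_∞ < ∞, and let r : ℝ^n → [1,∞) be measurable with r⁺ ≤ p⁺. Define σ(t) = (1/r⁻ − 1/p_∞)·(1 + (1/p_∞)·(1/r⁻ − 1/r⁺)/((1 + 1/p_∞ − 1/r⁻)(1 + 1/p_∞ − 1/r⁺))) for 0 < t ≤ 1, and σ(t) = (1/r⁺ − 1/p_∞)·(1 − (1/p_∞)·(1/r⁻ − 1/r⁺)/((1 + 1/p_∞ − 1/r⁻)(1 + 1/p_∞ − 1/r⁺))) for t > 1. Then there exists a constant C > 0 such that for every t > 0 and every f ∈ L^{r(·)}(ℝ^n), ‖η_{t,m} * f‖_{L^{p(·)}(ℝ^n)} ≤ C t^{−nσ(t)} ‖f‖_{L^{r(·)}(ℝ^n)}. -/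

import Mathlib

open MeasureTheory Filter Real
open scoped ENNReal

noncomputable section

/-- Euclidean space `ℝⁿ`. -/
abbrev Esp (n : ℕ) := EuclideanSpace ℝ (Fin n)

/-- The variable exponent modular `ρ_{p(·)}(f) = ∫_{ℝⁿ} |f(x)|^{p(x)} dx`. -/
def vMod (n : ℕ) (p : Esp n → ℝ) (f : Esp n → ℝ) : ℝ≥0∞ :=
  ∫⁻ x, (ENNReal.ofReal |f x|) ^ (p x) ∂volume

/-- The Luxemburg norm `‖f‖_{L^{p(·)}} = inf {λ > 0 : ρ_{p(·)}(f/λ) ≤ 1}`. -/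
def luxNorm (n : ℕ) (p : Esp n → ℝ) (f : Esp n → ℝ) : ℝ :=
  sInf {lam : ℝ | 0 < lam ∧ vMod n p (fun x => f x / lam) ≤ 1}

/-- Membership in the variable exponent Lebesgue space `L^{p(·)}(ℝⁿ)`. -/
def MemVLp (n : ℕ) (p : Esp n → ℝ) (f : Esp n → ℝ) : Prop :=
  AEMeasurable f volume ∧ ∃ lam : ℝ, 0 < lam ∧ vMod n p (fun x => f x / lam) ≤ 1

/-- Global log-Hölder continuity of `1/p` with decay value `l` (representing `l = 1/p_∞`). -/
def IsLogHolder (n : ℕ) (p : Esp n → ℝ) (l : ℝ) : Prop :=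
  ∃ c : ℝ, 0 < c ∧
    (∀ x y : Esp n, |1 / p x - 1 / p y| ≤ c / Real.log (Real.exp 1 + 1 / ‖x - y‖)) ∧
    (∀ x : Esp n, |1 / p x - l| ≤ c / Real.log (Real.exp 1 + ‖x‖))

/-- The kernel `η_{t,m}(x) = t^{-n} (1 + |x|/t)^{-m}`. -/
def etaKer (n : ℕ) (t m : ℝ) (x : Esp n) : ℝ :=
  t ^ (-(n : ℝ)) * (1 + ‖x‖ / t) ^ (-m)

/-- Convolution `(u * v)(x) = ∫ u(x - y) v(y) dy`. -/
def convR (n : ℕ) (u v : Esp n → ℝ) (x : Esp n) : ℝ :=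
  ∫ y, u (x - y) * v y ∂volume


/-- A simple form of Young's convolution inequality. -/
lemma young_aux (n : ℕ) (k g : Esp n → ℝ≥0∞) (hk : Measurable k) (hg : Measurable g)
    (T : ℝ≥0∞) (hkT : ∀ x, k x ≤ T) (q P : ℝ) (hq : 1 ≤ q) (hqP : q ≤ P)
    (hgq : ∫⁻ y, g y ^ q ≤ 1) :
    ∫⁻ x, (∫⁻ y, k (x - y) * g y) ^ P ≤
      ((∫⁻ x, k x) ^ (P * (1 - 1 / q)) * (∫⁻ x, k x)) * T ^ (P / q - 1) := by
  have hq0 : 0 < q := by linarith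
  have hP0 : 0 < P := by linarith
  have hq' : 0 ≤ 1 - 1 / q := by
    rw [sub_nonneg, div_le_one hq0]; exact hq
  have hPq : 0 ≤ P / q - 1 := by
    rw [sub_nonneg, one_le_div hq0]; exact hqP
  set A := ∫⁻ x, k x with hA
  have hpt : ∀ x, (∫⁻ y, k (x - y) * g y) ^ P ≤
      (A ^ (P * (1 - 1 / q)) * T ^ (P / q - 1)) * ∫⁻ y, k (x - y) * g y ^ q := by
    intro x
    set J := ∫⁻ y, k (x - y) * g y ^ q with hJ
    have hJT : J ≤ T := by
      calc J ≤ ∫⁻ y, T * g y ^ q := by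
            exact lintegral_mono fun y => mul_le_mul_left (hkT _) _
        _ = T * ∫⁻ y, g y ^ q := by
            rw [lintegral_const_mul _ (hg.pow_const q)]
        _ ≤ T * 1 := by gcongr
        _ = T := mul_one _
    have h1 : ∫⁻ y, k (x - y) * g y ≤ A ^ (1 - 1 / q) * J ^ (1 / q) := by
      have hk' : Measurable fun y => k (x - y) := hk.comp (measurable_const.sub measurable_id)
      have := ENNReal.lintegral_mul_norm_pow_le (μ := (volume : Measure (Esp n)))
        (f := fun y => k (x - y)) (g := fun y => k (x - y) * g y ^ q)
        hk'.aemeasurable (hk'.mul (hg.pow_const q)).aemeasurable hq'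
        (by positivity : 0 ≤ 1 / q) (by ring)
      rw [lintegral_sub_left_eq_self (fun y => k y) x] at this
      refine le_trans (le_of_eq ?_) this
      congr 1; ext y
      rw [ENNReal.mul_rpow_of_nonneg _ _ (by positivity : 0 ≤ 1 / q), ← mul_assoc,
        ← ENNReal.rpow_add_of_nonneg _ _ hq' (by positivity), ← ENNReal.rpow_mul]
      simp [hq0.ne']
    calc (∫⁻ y, k (x - y) * g y) ^ P ≤ (A ^ (1 - 1 / q) * J ^ (1 / q)) ^ P := by gcongr
      _ = A ^ (P * (1 - 1 / q)) * (J ^ (P / q - 1) * J ^ (1 : ℝ)) := by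
          rw [ENNReal.mul_rpow_of_nonneg _ _ hP0.le, ← ENNReal.rpow_mul, ← ENNReal.rpow_mul,
            ← ENNReal.rpow_add_of_nonneg _ _ hPq zero_le_one]
          congr 2 <;> ring
      _ ≤ A ^ (P * (1 - 1 / q)) * (T ^ (P / q - 1) * J) := by
          rw [ENNReal.rpow_one]; gcongr
      _ = _ := by rw [mul_assoc]
  have hm2 : Measurable fun z : Esp n × Esp n => k (z.1 - z.2) * g z.2 ^ q :=
    (hk.comp (measurable_fst.sub measurable_snd)).mul ((hg.comp measurable_snd).pow_const q)
  have hm3 : Measurable fun x => ∫⁻ y, k (x - y) * g y ^ q := hm2.lintegral_prod_right'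
  calc _ ≤ ∫⁻ x, (A ^ (P * (1 - 1 / q)) * T ^ (P / q - 1)) * ∫⁻ y, k (x - y) * g y ^ q :=
        lintegral_mono hpt
    _ = (A ^ (P * (1 - 1 / q)) * T ^ (P / q - 1)) * ∫⁻ x, ∫⁻ y, k (x - y) * g y ^ q := by
        rw [lintegral_const_mul _ hm3]
    _ = (A ^ (P * (1 - 1 / q)) * T ^ (P / q - 1)) * (A * ∫⁻ y, g y ^ q) := by
        congr 1
        rw [lintegral_lintegral_swap hm2.aemeasurable, ← lintegral_const_mul _ (hg.pow_const q)]
        congr 1; ext y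
        have hky : Measurable fun x => k (x - y) := hk.comp (measurable_id.sub measurable_const)
        rw [lintegral_mul_const _ hky,
          lintegral_sub_right_eq_self (fun x => k x) y]
    _ ≤ (A ^ (P * (1 - 1 / q)) * T ^ (P / q - 1)) * (A * 1) := by gcongr
    _ = _ := by ring

/-- The pointwise estimate behind `L^{p_∞} ⊆ L^{p(·)}`. -/
lemma pt_real (p P c L K a : ℝ) (hp : 1 ≤ p) (hpP : p ≤ P) (hL : 0 < L) (hK : 0 < K)
    (hc : 1 / p - 1 / P ≤ c / L) (ha : 0 ≤ a) :
    (Real.exp (-(c * K)) * a) ^ p ≤ a ^ P + Real.exp (-(K * L)) := by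
  have hp0 : 0 < p := by linarith
  have hP0 : 0 < P := by linarith
  rcases ha.eq_or_lt with rfl | ha
  · simp only [mul_zero, Real.zero_rpow hp0.ne', Real.zero_rpow hP0.ne']; positivity
  obtain ⟨b, rfl⟩ : ∃ b, Real.exp b = a := ⟨Real.log a, Real.exp_log ha⟩
  rw [← Real.exp_add, ← Real.exp_mul, ← Real.exp_mul]
  have hc' : L * (P - p) ≤ c * (p * P) := by
    have h1 : 1 / p - 1 / P = (P - p) / (p * P) := by field_simp
    rw [h1, div_le_div_iff₀ (by positivity) hL] at hc
    linarith
  by_cases hb : -(K * L) ≤ b * P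
  · have : (-(c * K) + b) * p ≤ b * P := by
      have h2 : 0 ≤ (b * P + K * L) * (P - p) := mul_nonneg (by linarith) (by linarith)
      have h3 : 0 ≤ K * (c * (p * P) - L * (P - p)) := mul_nonneg hK.le (by linarith)
      have h4 : 0 ≤ P * (b * P - (-(c * K) + b) * p) := by linarith
      have := nonneg_of_mul_nonneg_right h4 hP0
      linarith
    have := Real.exp_le_exp.2 this
    have := Real.exp_pos (-(K * L))
    linarith
  · push Not at hb
    have : (-(c * K) + b) * p ≤ -(K * L) := by
      have h2 : 0 ≤ (-(b * P) - K * L) * p := mul_nonneg (by linarith) (by linarith)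
      have h3 : 0 ≤ K * (c * (p * P) - L * (P - p)) := mul_nonneg hK.le (by linarith)
      have h4 : 0 ≤ P * (-(K * L) - (-(c * K) + b) * p) := by linarith
      have := nonneg_of_mul_nonneg_right h4 hP0
      linarith
    have := Real.exp_le_exp.2 this
    have := Real.exp_pos (b * P)
    linarith

lemma pt_enn (p P c K s : ℝ) (a : ℝ≥0∞) (hp : 1 ≤ p) (hpP : p ≤ P) (hs : 0 ≤ s) (hK : 0 < K)
    (hc : 1 / p - 1 / P ≤ c / Real.log (Real.exp 1 + s)) :
    (ENNReal.ofReal (Real.exp (-(c * K))) * a) ^ p ≤ a ^ P + ENNReal.ofReal ((1 + s) ^ (-K)) := by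
  have hp0 : 0 < p := by linarith
  have hP0 : 0 < P := by linarith
  rcases eq_or_ne a ⊤ with rfl | ha
  · simp [ENNReal.top_rpow_of_pos hP0]
  have he : 1 < Real.exp 1 := by simp
  have hL : 0 < Real.log (Real.exp 1 + s) := Real.log_pos (by linarith)
  have := pt_real p P c _ K a.toReal hp hpP hL hK hc ENNReal.toReal_nonneg
  rw [← ENNReal.ofReal_toReal ha, ← ENNReal.ofReal_mul (Real.exp_pos _).le,
    ENNReal.ofReal_rpow_of_nonneg (by positivity) hp0.le,
    ENNReal.ofReal_rpow_of_nonneg (by positivity) hP0.le,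
    ← ENNReal.ofReal_add (by positivity) (by positivity)]
  apply ENNReal.ofReal_le_ofReal
  refine this.trans ?_
  gcongr
  calc Real.exp (-(K * Real.log (Real.exp 1 + s))) = (Real.exp 1 + s) ^ (-K) := by
        rw [Real.rpow_def_of_pos (by positivity)]; congr 1; ring
    _ ≤ (1 + s) ^ (-K) :=
        Real.rpow_le_rpow_of_nonpos (by linarith) (by linarith) (by linarith)

lemma eta_meas (n : ℕ) (t m : ℝ) : Measurable (etaKer n t m) := by
  unfold etaKer; fun_prop

lemma eta_nonneg (n : ℕ) (t m : ℝ) (ht : 0 < t) (x : Esp n) : 0 ≤ etaKer n t m x := by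
  unfold etaKer; positivity

lemma eta_le (n : ℕ) (t m : ℝ) (ht : 0 < t) (hm : 0 ≤ m) (x : Esp n) :
    etaKer n t m x ≤ t ^ (-(n : ℝ)) := by
  unfold etaKer
  have : (1 + ‖x‖ / t) ^ (-m) ≤ 1 :=
    Real.rpow_le_one_of_one_le_of_nonpos (by linarith [div_nonneg (norm_nonneg x) ht.le])
      (by linarith)
  have h2 : 0 ≤ t ^ (-(n : ℝ)) := by positivity
  nlinarith

lemma eta_lint (n : ℕ) (t m : ℝ) (ht : 0 < t) (hm : (n : ℝ) < m) :
    ∫⁻ x : Esp n, ENNReal.ofReal (etaKer n t m x) =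
      ENNReal.ofReal (∫ x : Esp n, (1 + ‖x‖) ^ (-m)) := by
  have hI : Integrable (fun x : Esp n => (1 + ‖x‖) ^ (-m)) :=
    integrable_one_add_norm (by simpa using hm)
  have he : etaKer n t m = fun x => t ^ (-(n : ℝ)) * (fun x : Esp n => (1 + ‖x‖) ^ (-m)) (t⁻¹ • x) := by
    ext x
    simp only [etaKer, norm_smul, Real.norm_eq_abs, abs_of_pos (inv_pos.2 ht)]
    rw [div_eq_inv_mul]
  have hI2 : Integrable (etaKer n t m) := by
    rw [he]
    exact ((integrable_comp_smul_iff volume _ (inv_ne_zero ht.ne')).2 hI).const_mul _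
  rw [← ofReal_integral_eq_lintegral_ofReal hI2 (ae_of_all _ (eta_nonneg n t m ht)), he,
    integral_const_mul,
    Measure.integral_comp_inv_smul volume (fun x : Esp n => (1 + ‖x‖) ^ (-m)) t, smul_eq_mul, ← mul_assoc]
  congr 1
  rw [abs_of_pos (by positivity), finrank_euclideanSpace, Fintype.card_fin, Real.rpow_neg ht.le,
    Real.rpow_natCast, inv_mul_cancel₀ (by positivity), one_mul]

lemma core (n : ℕ) (m : ℝ) (hm : (n : ℝ) < m)
    (pexp : Esp n → ℝ) (hp1 : ∀ x, 1 ≤ pexp x)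
    (r : Esp n → ℝ) (hr1 : ∀ x, 1 ≤ r x)
    (P rm rp : ℝ) (hpP : ∀ᵐ x, pexp x ≤ P) (hrm : ∀ᵐ x, rm ≤ r x) (hrp : ∀ᵐ x, r x ≤ rp)
    (h1 : 1 ≤ rm) (h2 : rm ≤ rp) (h3 : rp ≤ P)
    (hlog : IsLogHolder n pexp (1 / P)) :
    ∃ C : ℝ, 0 < C ∧ ∀ t τ : ℝ, 0 < t → 0 < τ →
      t ^ (-(n : ℝ) * (1 / rm - 1 / P)) ≤ τ → t ^ (-(n : ℝ) * (1 / rp - 1 / P)) ≤ τ →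
      ∀ f : Esp n → ℝ, AEMeasurable f → vMod n r f ≤ 1 →
        vMod n pexp (fun x => convR n (etaKer n t m) f x / (C * τ)) ≤ 1 := by
  obtain ⟨c, hc, -, hdec⟩ := hlog
  have hn0 : (0 : ℝ) ≤ n := Nat.cast_nonneg n
  have hm0 : 0 < m := by linarith
  have hP0 : 0 < P := by linarith
  set A : ℝ≥0∞ := ENNReal.ofReal (∫ x : Esp n, (1 + ‖x‖) ^ (-m)) with hA
  have hAtop : A ≠ ⊤ := ENNReal.ofReal_ne_top
  set W : ℝ≥0∞ := ∫⁻ x : Esp n, ENNReal.ofReal ((1 + ‖x‖) ^ (-m)) with hW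
  have hWtop : W ≠ ⊤ := (finite_integral_one_add_norm (by simpa using hm)).ne
  set γ := Real.exp (-(c * m)) with hγ
  have hγ0 : 0 < γ := Real.exp_pos _
  set A1 : ℝ≥0∞ := A ^ (P * (1 - 1 / rm)) * A
  set A2 : ℝ≥0∞ := A ^ (P * (1 - 1 / rp)) * A
  have hexp : ∀ q, 1 ≤ q → 0 ≤ P * (1 - 1 / q) := by
    intro q hq
    have : 1 / q ≤ 1 := by rw [div_le_one (by linarith)]; exact hq
    exact mul_nonneg hP0.le (by linarith)
  have hA1 : A1 ≠ ⊤ := ENNReal.mul_ne_top (ENNReal.rpow_ne_top_of_nonneg (hexp _ h1) hAtop) hAtop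
  have hA2 : A2 ≠ ⊤ :=
    ENNReal.mul_ne_top (ENNReal.rpow_ne_top_of_nonneg (hexp _ (h1.trans h2)) hAtop) hAtop
  set S : ℝ≥0∞ := 2 ^ (P - 1) * (A1 + A2) + W with hS
  have hStop : S ≠ ⊤ := by
    refine ENNReal.add_ne_top.2 ⟨ENNReal.mul_ne_top ?_ (ENNReal.add_ne_top.2 ⟨hA1, hA2⟩), hWtop⟩
    exact ENNReal.rpow_ne_top_of_nonneg (by linarith) (by simp)
  set M : ℝ := S.toReal + 1 with hM
  have hM1 : 1 ≤ M := by linarith [ENNReal.toReal_nonneg (a := S)]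
  have hM0 : 0 < M := by linarith
  have hSM : S ≤ ENNReal.ofReal M := by
    rw [← ENNReal.ofReal_toReal hStop]; exact ENNReal.ofReal_le_ofReal (by linarith)
  refine ⟨M / γ, by positivity, ?_⟩
  intro t τ ht hτ hτ1 hτ2 f hf hmod
  set k : Esp n → ℝ≥0∞ := fun x => ENNReal.ofReal (etaKer n t m x) with hk
  have hkm : Measurable k := (eta_meas n t m).ennreal_ofReal
  set F : Esp n → ℝ≥0∞ := fun x => ENNReal.ofReal |hf.mk f x| with hF
  have hFm : Measurable F := by
    have := hf.measurable_mk; exact (this.abs).ennreal_ofReal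
  have hFf : ∀ᵐ x, ENNReal.ofReal |f x| = F x := by
    filter_upwards [hf.ae_eq_mk] with x hx
    simp only [hF]; rw [← hx]
  set F1 : Esp n → ℝ≥0∞ := {x | 1 ≤ F x}.indicator F with hF1
  set F2 : Esp n → ℝ≥0∞ := {x | 1 ≤ F x}ᶜ.indicator F with hF2
  have hset : MeasurableSet {x | 1 ≤ F x} := measurableSet_le measurable_const hFm
  have hF1m : Measurable F1 := hFm.indicator hset
  have hF2m : Measurable F2 := hFm.indicator hset.compl
  have hFs : ∀ x, F x = F1 x + F2 x := by
    intro x; exact (congrFun (Set.indicator_self_add_compl {x | 1 ≤ F x} F) x).symm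
  have hb1 : ∫⁻ x, F1 x ^ rm ≤ 1 := by
    refine le_trans (lintegral_mono_ae ?_) hmod
    filter_upwards [hFf, hrm] with x hx hxr
    rw [hx]
    by_cases h : 1 ≤ F x
    · simp only [hF1, Set.indicator, Set.mem_ofPred_eq, h, if_true]
      exact ENNReal.rpow_le_rpow_of_exponent_le h hxr
    · simp only [hF1, Set.indicator, Set.mem_ofPred_eq, h, if_false]
      rw [ENNReal.zero_rpow_of_pos (by linarith)]; exact zero_le
  have hb2 : ∫⁻ x, F2 x ^ rp ≤ 1 := by
    refine le_trans (lintegral_mono_ae ?_) hmod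
    filter_upwards [hFf, hrp] with x hx hxr
    rw [hx]
    by_cases h : 1 ≤ F x
    · simp only [hF2, Set.indicator, Set.mem_compl_iff, Set.mem_ofPred_eq, h, not_true, if_false]
      rw [ENNReal.zero_rpow_of_pos (by linarith)]; exact zero_le
    · simp only [hF2, Set.indicator, Set.mem_compl_iff, Set.mem_ofPred_eq, h, not_false_iff, if_true]
      exact ENNReal.rpow_le_rpow_of_exponent_ge (not_le.1 h).le hxr
  set G1 : Esp n → ℝ≥0∞ := fun x => ∫⁻ y, k (x - y) * F1 y with hG1
  set G2 : Esp n → ℝ≥0∞ := fun x => ∫⁻ y, k (x - y) * F2 y with hG2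
  have hGm : ∀ g : Esp n → ℝ≥0∞, Measurable g → Measurable fun x => ∫⁻ y, k (x - y) * g y := by
    intro g hg
    have : Measurable fun z : Esp n × Esp n => k (z.1 - z.2) * g z.2 :=
      (hkm.comp (measurable_fst.sub measurable_snd)).mul (hg.comp measurable_snd)
    exact this.lintegral_prod_right'
  have hG1m : Measurable G1 := hGm _ hF1m
  have hG2m : Measurable G2 := hGm _ hF2m
  have hconv : ∀ x, ENNReal.ofReal |convR n (etaKer n t m) f x| ≤ G1 x + G2 x := by
    intro x
    have e1 : ENNReal.ofReal |convR n (etaKer n t m) f x| ≤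
        ∫⁻ y, ‖etaKer n t m (x - y) * f y‖ₑ := by
      rw [← Real.enorm_eq_ofReal_abs]
      exact enorm_integral_le_lintegral_enorm _
    refine e1.trans (le_of_eq ?_)
    have hkx : Measurable fun y => k (x - y) := hkm.comp (measurable_const.sub measurable_id)
    rw [hG1, hG2]
    simp only
    have hkF : Measurable fun y => k (x - y) * F1 y := hkx.mul hF1m
    rw [← lintegral_add_left hkF]
    apply lintegral_congr_ae
    filter_upwards [hFf] with y hy
    rw [← mul_add, ← hFs, ← hy, enorm_mul, Real.enorm_eq_ofReal_abs, Real.enorm_eq_ofReal_abs,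
      abs_of_nonneg (eta_nonneg n t m ht _)]
  set T : ℝ≥0∞ := ENNReal.ofReal (t ^ (-(n : ℝ))) with hT
  have hkT : ∀ x, k x ≤ T := fun x => ENNReal.ofReal_le_ofReal (eta_le n t m ht hm0.le x)
  have hAk : ∫⁻ x, k x = A := eta_lint n t m ht hm
  set ι : ℝ≥0∞ := ENNReal.ofReal (τ⁻¹) ^ P with hι
  have hTι : ∀ q, 1 ≤ q → q ≤ P → t ^ (-(n : ℝ) * (1 / q - 1 / P)) ≤ τ →
      T ^ (P / q - 1) * ι ≤ 1 := by
    intro q hq hqP hqt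
    have hq0 : 0 < q := by linarith
    have hPq : 0 ≤ P / q - 1 := by
      rw [sub_nonneg, one_le_div hq0]; exact hqP
    rw [hT, hι, ENNReal.ofReal_rpow_of_nonneg (by positivity) hPq,
      ENNReal.ofReal_rpow_of_nonneg (by positivity) hP0.le, ← ENNReal.ofReal_mul (by positivity),
      ENNReal.ofReal_le_one]
    have e : (t ^ (-(n : ℝ))) ^ (P / q - 1) = (t ^ (-(n : ℝ) * (1 / q - 1 / P))) ^ P := by
      rw [← Real.rpow_mul ht.le, ← Real.rpow_mul ht.le]
      congr 1; field_simp
    rw [e, ← Real.mul_rpow (by positivity) (by positivity)]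
    apply Real.rpow_le_one (by positivity) _ hP0.le
    rw [← div_eq_mul_inv, div_le_one hτ]; exact hqt
  have hY1 : (∫⁻ x, G1 x ^ P) * ι ≤ A1 := by
    have := young_aux n k F1 hkm hF1m T hkT rm P h1 (h2.trans h3) hb1
    rw [hAk] at this
    calc _ ≤ (A1 * T ^ (P / rm - 1)) * ι := by gcongr
      _ = A1 * (T ^ (P / rm - 1) * ι) := by ring
      _ ≤ A1 * 1 := by gcongr; exact hTι rm h1 (h2.trans h3) hτ1
      _ = A1 := mul_one _
  have hY2 : (∫⁻ x, G2 x ^ P) * ι ≤ A2 := by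
    have := young_aux n k F2 hkm hF2m T hkT rp P (h1.trans h2) h3 hb2
    rw [hAk] at this
    calc _ ≤ (A2 * T ^ (P / rp - 1)) * ι := by gcongr
      _ = A2 * (T ^ (P / rp - 1) * ι) := by ring
      _ ≤ A2 * 1 := by gcongr; exact hTι rp (h1.trans h2) h3 hτ2
      _ = A2 := mul_one _
  have hMinv : ENNReal.ofReal (M⁻¹) ≤ 1 := by
    rw [ENNReal.ofReal_le_one]; exact inv_le_one_of_one_le₀ hM1
  have hpt : ∀ᵐ x, ENNReal.ofReal |convR n (etaKer n t m) f x / (M / γ * τ)| ^ pexp x ≤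
      ENNReal.ofReal (M⁻¹) * (2 ^ (P - 1) * (G1 x ^ P * ι + G2 x ^ P * ι) +
        ENNReal.ofReal ((1 + ‖x‖) ^ (-m))) := by
    filter_upwards [hpP] with x hx
    set a : ℝ≥0∞ := (G1 x + G2 x) * ENNReal.ofReal (τ⁻¹) with ha
    have e1 : ENNReal.ofReal |convR n (etaKer n t m) f x / (M / γ * τ)| ≤
        ENNReal.ofReal (M⁻¹) * (ENNReal.ofReal γ * a) := by
      have : |convR n (etaKer n t m) f x / (M / γ * τ)| =
          M⁻¹ * (γ * (|convR n (etaKer n t m) f x| * τ⁻¹)) := by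
        rw [abs_div, abs_of_pos (show 0 < M / γ * τ by positivity)]
        field_simp
      rw [this, ENNReal.ofReal_mul (by positivity), ENNReal.ofReal_mul (by positivity),
        ENNReal.ofReal_mul (by positivity)]
      rw [ha]
      gcongr
      exact hconv x
    have hp0 : 0 ≤ pexp x := by linarith [hp1 x]
    have hd : 1 / pexp x - 1 / P ≤ c / Real.log (Real.exp 1 + ‖x‖) :=
      (le_abs_self _).trans (hdec x)
    calc _ ≤ (ENNReal.ofReal (M⁻¹) * (ENNReal.ofReal γ * a)) ^ pexp x := by gcongr
      _ = ENNReal.ofReal (M⁻¹) ^ pexp x * (ENNReal.ofReal γ * a) ^ pexp x :=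
          ENNReal.mul_rpow_of_nonneg _ _ hp0
      _ ≤ ENNReal.ofReal (M⁻¹) ^ (1 : ℝ) * (a ^ P + ENNReal.ofReal ((1 + ‖x‖) ^ (-m))) := by
          gcongr ?_ * ?_
          · exact ENNReal.rpow_le_rpow_of_exponent_ge hMinv (hp1 x)
          · exact pt_enn _ P c m ‖x‖ a (hp1 x) hx (norm_nonneg x) hm0 hd
      _ ≤ _ := by
          rw [ENNReal.rpow_one]
          gcongr
          rw [ha, ENNReal.mul_rpow_of_nonneg _ _ hP0.le, ← add_mul, ← mul_assoc]
          gcongr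
          exact ENNReal.rpow_add_le_mul_rpow_add_rpow _ _ (by linarith)
  have hwm : Measurable fun x : Esp n => ENNReal.ofReal ((1 + ‖x‖) ^ (-m)) := by fun_prop
  have hg1 : Measurable fun x => G1 x ^ P * ι := (hG1m.pow_const P).mul_const ι
  have hg2 : Measurable fun x => G2 x ^ P * ι := (hG2m.pow_const P).mul_const ι
  unfold vMod
  calc _ ≤ ∫⁻ x, ENNReal.ofReal (M⁻¹) * (2 ^ (P - 1) * (G1 x ^ P * ι + G2 x ^ P * ι) +
        ENNReal.ofReal ((1 + ‖x‖) ^ (-m))) := lintegral_mono_ae hpt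
    _ = ENNReal.ofReal (M⁻¹) *
        (2 ^ (P - 1) * ((∫⁻ x, G1 x ^ P) * ι + (∫⁻ x, G2 x ^ P) * ι) + W) := by
        have hg3 : Measurable fun x => G1 x ^ P * ι + G2 x ^ P * ι := hg1.add hg2
        have hg4 : Measurable fun x => (2 : ℝ≥0∞) ^ (P - 1) * (G1 x ^ P * ι + G2 x ^ P * ι) +
            ENNReal.ofReal ((1 + ‖x‖) ^ (-m)) := (hg3.const_mul _).add hwm
        rw [lintegral_const_mul _ hg4,
          lintegral_add_right _ hwm, lintegral_const_mul _ hg3,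
          lintegral_add_left hg1, lintegral_mul_const _ (hG1m.pow_const P),
          lintegral_mul_const _ (hG2m.pow_const P)]
    _ ≤ ENNReal.ofReal (M⁻¹) * S := by rw [hS]; gcongr
    _ ≤ ENNReal.ofReal (M⁻¹) * ENNReal.ofReal M := by gcongr
    _ = 1 := by
        rw [← ENNReal.ofReal_mul (by positivity), inv_mul_cancel₀ hM0.ne', ENNReal.ofReal_one]

/-- Theorem 3.17(1) of the paper: for `p ∈ P^log` with `p⁺ = p_∞ < ∞` and a measurable
exponent `r` with `r⁺ ≤ p⁺`, `‖η_{t,m} * f‖_{L^{p(·)}} ≤ C t^{-nσ(t)} ‖f‖_{L^{r(·)}}`. -/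
theorem statement13 (n : ℕ) (hn : 1 ≤ n) (m : ℝ) (hm : (n : ℝ) < m)
    (pexp : Esp n → ℝ) (hpmeas : Measurable pexp) (hp1 : ∀ x, 1 ≤ pexp x)
    (r : Esp n → ℝ) (hrmeas : Measurable r) (hr1 : ∀ x, 1 ≤ r x)
    (pinf rm rp : ℝ) (hpinf : pinf = essSup pexp volume)
    (hrm : rm = essInf r volume) (hrp : rp = essSup r volume)
    (hpbdd : IsBoundedUnder (· ≤ ·) (ae (volume : Measure (Esp n))) pexp)
    (hrbdd : IsBoundedUnder (· ≤ ·) (ae (volume : Measure (Esp n))) r)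
    (hlog : IsLogHolder n pexp (1 / pinf))
    (hrple : rp ≤ pinf) :
    ∃ C : ℝ, 0 < C ∧ ∀ t : ℝ, 0 < t → ∀ f : Esp n → ℝ,
      MemVLp n r f →
      luxNorm n pexp (convR n (etaKer n t m) f) ≤
        C * t ^ (-(n : ℝ) *
          (if t ≤ 1 then
            (1 / rm - 1 / pinf) *
              (1 + (1 / pinf) * ((1 / rm - 1 / rp) /
                ((1 + 1 / pinf - 1 / rm) * (1 + 1 / pinf - 1 / rp))))
          else
            (1 / rp - 1 / pinf) *
              (1 - (1 / pinf) * ((1 / rm - 1 / rp) /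
                ((1 + 1 / pinf - 1 / rm) * (1 + 1 / pinf - 1 / rp)))))) *
        luxNorm n r f := by

  have hrlb : IsBoundedUnder (· ≥ ·) (ae (volume : Measure (Esp n))) r :=
    isBoundedUnder_of ⟨1, hr1⟩
  have hpP : ∀ᵐ x, pexp x ≤ pinf := by rw [hpinf]; exact ae_le_essSup hpbdd
  have hrm' : ∀ᵐ x, rm ≤ r x := by rw [hrm]; exact ae_essInf_le hrlb
  have hrp' : ∀ᵐ x, r x ≤ rp := by rw [hrp]; exact ae_le_essSup hrbdd
  have h1 : 1 ≤ rm := by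
    rw [hrm]
    exact le_liminf_of_le hrbdd.isCoboundedUnder_ge (Eventually.of_forall hr1)
  have h2 : rm ≤ rp := by
    obtain ⟨x, hx1, hx2⟩ := (hrm'.and hrp').exists
    exact hx1.trans hx2
  obtain ⟨C, hC, hcore⟩ := core n m hm pexp hp1 r hr1 pinf rm rp hpP hrm' hrp' h1 h2 hrple hlog
  refine ⟨C, hC, ?_⟩
  intro t ht f hf
  have hP0 : 0 < pinf := by linarith
  have hrm0 : 0 < rm := by linarith
  have hrp0 : 0 < rp := by linarith
  have i1 : 1 / pinf ≤ 1 / rp := one_div_le_one_div_of_le hrp0 hrple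
  have i2 : 1 / rp ≤ 1 / rm := one_div_le_one_div_of_le hrm0 h2
  have i3 : 1 / rm ≤ 1 := by rw [div_le_one hrm0]; exact h1
  have i4 : 0 < 1 / pinf := by positivity
  have hQ : 0 ≤ (1 / pinf) * ((1 / rm - 1 / rp) /
                ((1 + 1 / pinf - 1 / rm) * (1 + 1 / pinf - 1 / rp))) := by
    apply mul_nonneg i4.le
    apply div_nonneg (by linarith)
    exact mul_nonneg (by linarith) (by linarith)
  set Q := (1 / pinf) * ((1 / rm - 1 / rp) /
                ((1 + 1 / pinf - 1 / rm) * (1 + 1 / pinf - 1 / rp))) with hQdef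
  set e : ℝ := if t ≤ 1 then (1 / rm - 1 / pinf) * (1 + Q) else (1 / rp - 1 / pinf) * (1 - Q)
    with he
  set τ := t ^ (-(n : ℝ) * e) with hτ
  have hτ0 : 0 < τ := Real.rpow_pos_of_pos ht _
  have hn0 : (0 : ℝ) ≤ n := Nat.cast_nonneg n
  have hbd : t ^ (-(n : ℝ) * (1 / rm - 1 / pinf)) ≤ τ ∧
      t ^ (-(n : ℝ) * (1 / rp - 1 / pinf)) ≤ τ := by
    by_cases h : t ≤ 1
    · have e1 : 1 / rm - 1 / pinf ≤ e := by
        rw [he, if_pos h]; nlinarith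
      constructor
      · apply Real.rpow_le_rpow_of_exponent_ge ht h
        nlinarith
      · apply Real.rpow_le_rpow_of_exponent_ge ht h
        nlinarith
    · have e1 : e ≤ 1 / rp - 1 / pinf := by
        rw [he, if_neg h]; nlinarith
      push Not at h
      constructor
      · apply Real.rpow_le_rpow_of_exponent_le h.le
        nlinarith
      · apply Real.rpow_le_rpow_of_exponent_le h.le
        nlinarith
  have hCτ : 0 < C * τ := mul_pos hC hτ0
  rw [← div_le_iff₀' hCτ]
  unfold luxNorm
  refine le_csInf hf.2 ?_
  rintro lam ⟨hlam, hl⟩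
  rw [div_le_iff₀' hCτ]
  refine csInf_le ⟨0, fun y hy => hy.1.le⟩ ⟨by positivity, ?_⟩
  have := hcore t τ ht hτ0 hbd.1 hbd.2 (fun x => f x / lam) (hf.1.div_const lam) hl
  refine le_trans (le_of_eq ?_) this
  congr 1; ext x
  have : convR n (etaKer n t m) (fun x => f x / lam) x = convR n (etaKer n t m) f x / lam := by
    unfold convR
    rw [← integral_div]
    congr 1; ext y; ring
  rw [this, div_div, mul_comm lam]
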